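/- (Lemma 2, '▽' identity.) Let W be a binary-input discrete memoryless channel with finite output alphabet 𝒴, let n ≥ 4 be even, let A be an (n/2)×(n/2) matrix over 𝔽₂, let 𝓘 ⊆ {1,…,n−1} satisfy the separation condition, and set Gₙ := P_𝓘·(A ⊗ G₂). Suppose 1 ≤ i ≤ n/2−1, 2i ∉ 𝓘 and 2(i−1) ∉ 𝓘. Then for all y ∈ 𝒴ⁿ and all u₁,…,u_{2i} ∈ 𝔽₂: V_{2i−1}^{Gₙ}(y, (u₁,…,u_{2i−2}) | u_{2i−1}, u_{2i}) = (1/4)·∑_{c,d∈𝔽₂} V_i^A(y_odd, (ũ₁,ũ₃,…,ũ_{2i−3}) | u_{2i−1}+u_{2i}, c+d)·V_i^A(y_even, (ũ₂,ũ₄,…,ũ_{2i−2}) | u_{2i}, d). This is the identity V_{2i−1}^{Gₙ} = (V_i^A)^▽, which covers Cases iv) and v) of Lemma 2. -/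

import Mathlib

/-!
Since `2i ∉ 𝓘` and `2(i-1) ∉ 𝓘`, the index permutation behind `P_𝓘` maps the first `2i`
coordinates to themselves and fixes the last two of them. Every adjacent-bits-channel value is `4`
times a constrained sum over messages (`adjChannel_eq`), because two message bits take prescribed
values with probability `1/4` (`prob_two_bits`).

Substituting `û = u P_𝓘` and then `a_j = û_{2j} + û_{2j+1}`, `b_j = û_{2j+1}` turns the codeword into
the interleaving of `aA` and `bA` (`vecMul_interKron_even`, `vecMul_interKron_odd`). The likelihood
then factors over `(a, b)`, and so does the constraint that the first `2i` bits are prescribed. Hence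
the sum on the left is a product of two prefix sums (`prefixSum_kron`), and each of these is, up to
a constant, the sum of `V_i^A` over its second conditioning bit (`sum_adjChannel`). On the right,
`(c, d) ↦ (c + d, d)` is a bijection, so the double sum is the same product.
-/

open scoped Classical

/-- Probability of an event `E` under a pmf `P` on a finite space. -/
noncomputable def prob {Ω : Type*} [Fintype Ω] (P : Ω → ℝ) (E : Ω → Prop) : ℝ :=
  ∑ ω : Ω, if E ω then P ω else 0

/-- The polar-coding model `μ_G`: the joint pmf on message/output pairs, where the message
`u` is uniform on `𝔽₂ⁿ`, the codeword is `uG`, and each coordinate is sent through the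
binary-input channel `W` (here `W x y` denotes the transition probability `W(y|x)`). -/
noncomputable def polarPMF {𝒴 : Type*} [Fintype 𝒴] {n : ℕ}
    (W : ZMod 2 → 𝒴 → ℝ) (G : Matrix (Fin n) (Fin n) (ZMod 2)) :
    (Fin n → ZMod 2) × (Fin n → 𝒴) → ℝ :=
  fun p => (1 / 2 : ℝ) ^ n * ∏ j, W (Matrix.vecMul p.1 G j) (p.2 j)

/-- The adjacent-bits-channel `V_i^M` of the model `μ_M` (0-based index `i`):
`V_i^M(y, (u_0, …, u_{i-1}) | a, b) = P(Y = y, U_0 = u_0, …, U_{i-1} = u_{i-1} | U_i = a, U_{i+1} = b)`.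
Only the values `upre j` for `j < i` are relevant. -/
noncomputable def adjChannel {𝒴 : Type*} [Fintype 𝒴] {m : ℕ}
    (W : ZMod 2 → 𝒴 → ℝ) (M : Matrix (Fin m) (Fin m) (ZMod 2))
    (i : ℕ) (y : Fin m → 𝒴) (upre : ℕ → ZMod 2) (a b : ZMod 2) : ℝ :=
  prob (polarPMF W M)
      (fun p => p.2 = y ∧ ∀ j : Fin m,
        (j.val < i → p.1 j = upre j.val) ∧ (j.val = i → p.1 j = a) ∧
          (j.val = i + 1 → p.1 j = b)) /
    prob (polarPMF W M)
      (fun p => ∀ j : Fin m, (j.val = i → p.1 j = a) ∧ (j.val = i + 1 → p.1 j = b))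

/-- The 2×2 Arıkan kernel `G₂ = [[1,0],[1,1]]` over `𝔽₂`. -/
def G2 : Matrix (Fin 2) (Fin 2) (ZMod 2) := !![1, 0; 1, 1]

/-- The Kronecker product `A ⊗ G₂` under the interleaved index identification
`(j, k) ↦ 2j + k` (0-based): `(A ⊗ G₂)(r, c) = A(r/2, c/2) · G₂(r%2, c%2)`. -/
def interKron {m : ℕ} (A : Matrix (Fin m) (Fin m) (ZMod 2)) :
    Matrix (Fin (2 * m)) (Fin (2 * m)) (ZMod 2) :=
  fun r c =>
    A ⟨r.val / 2, by have := r.isLt; omega⟩ ⟨c.val / 2, by have := c.isLt; omega⟩ *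
      G2 ⟨r.val % 2, by omega⟩ ⟨c.val % 2, by omega⟩

/-- The (0-based) index map of the permutation `P_𝓘`: for each (1-based, paper) index
`i ∈ 𝓘`, the coordinates `i − 1` and `i` (0-based) are exchanged (so that
`(u P_𝓘)_j = u_{swapPerm 𝓘 j}` under the separation condition). -/
def swapPerm (I : Finset ℕ) (j : ℕ) : ℕ :=
  if j + 1 ∈ I then j + 1 else if j ∈ I then j - 1 else j

/-- The `n×n` permutation matrix `P_𝓘` over `𝔽₂`. -/
def permMatrix (I : Finset ℕ) (n : ℕ) : Matrix (Fin n) (Fin n) (ZMod 2) :=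
  fun r c => if swapPerm I r.val = c.val then 1 else 0

/-! ### The change of variables for `A ⊗ G₂` -/

/-- The interleaved identification of `Fin m × Fin 2` with `Fin (2m)`: `(j, k) ↦ 2j + k`. -/
def pairEquiv (m : ℕ) : Fin m × Fin 2 ≃ Fin (2 * m) where
  toFun p := ⟨2 * p.1.val + p.2.val, by have := p.1.isLt; have := p.2.isLt; omega⟩
  invFun r := (⟨r.val / 2, by have := r.isLt; omega⟩, ⟨r.val % 2, by omega⟩)
  left_inv p := by
    rcases p with ⟨⟨j, hj⟩, ⟨k, hk⟩⟩
    simp only [Prod.mk.injEq, Fin.mk.injEq]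
    omega
  right_inv r := by
    ext
    simp only
    omega

/-- The index `2j` in `Fin (2m)`. -/
def evIdx {m : ℕ} (j : Fin m) : Fin (2 * m) := ⟨2 * j.val, by have := j.isLt; omega⟩

/-- The index `2j + 1` in `Fin (2m)`. -/
def odIdx {m : ℕ} (j : Fin m) : Fin (2 * m) := ⟨2 * j.val + 1, by have := j.isLt; omega⟩

lemma sum_pairs {M : Type*} [AddCommMonoid M] {m : ℕ} (f : Fin (2 * m) → M) :
    ∑ r, f r = ∑ j : Fin m, (f (evIdx j) + f (odIdx j)) := by
  rw [← Equiv.sum_comp (pairEquiv m) f, Fintype.sum_prod_type]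
  simp only [Fin.sum_univ_two]
  rfl

lemma prod_pairs {M : Type*} [CommMonoid M] {m : ℕ} (f : Fin (2 * m) → M) :
    ∏ r, f r = (∏ j : Fin m, f (evIdx j)) * ∏ j : Fin m, f (odIdx j) := by
  rw [← Equiv.prod_comp (pairEquiv m) f, Fintype.prod_prod_type, ← Finset.prod_mul_distrib]
  simp only [Fin.prod_univ_two]
  rfl

lemma forall_pairs {m : ℕ} (P : Fin (2 * m) → Prop) :
    (∀ r, P r) ↔ ∀ j : Fin m, P (evIdx j) ∧ P (odIdx j) := by
  refine ⟨fun h j => ⟨h _, h _⟩, fun h r => ?_⟩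
  have hr := r.isLt
  obtain ⟨h0, h1⟩ := h ⟨r.val / 2, by omega⟩
  rcases Nat.mod_two_eq_zero_or_one r.val with hk | hk
  · convert h0 using 1
    ext
    simp only [evIdx]
    omega
  · convert h1 using 1
    ext
    simp only [odIdx]
    omega

/-- The change of variables `û ↦ (a, b)` with `a_j = û_{2j} + û_{2j+1}` and `b_j = û_{2j+1}`. -/
def splitEquiv (m : ℕ) :
    (Fin (2 * m) → ZMod 2) ≃ (Fin m → ZMod 2) × (Fin m → ZMod 2) where
  toFun w := (fun j => w (evIdx j) + w (odIdx j), fun j => w (odIdx j))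
  invFun p r :=
    if r.val % 2 = 0 then
      p.1 ⟨r.val / 2, by have := r.isLt; omega⟩ + p.2 ⟨r.val / 2, by have := r.isLt; omega⟩
    else p.2 ⟨r.val / 2, by have := r.isLt; omega⟩
  left_inv w := by
    funext r
    revert r
    rw [forall_pairs]
    intro j
    have hj : (2 * j.val + 1) / 2 = j.val := by omega
    have hj' : (2 * j.val + 1) % 2 = 1 := by omega
    simp [evIdx, odIdx, hj, hj', add_assoc, CharTwo.add_self_eq_zero]
  right_inv p := by
    have hj (j : Fin m) : (2 * j.val + 1) / 2 = j.val := by omega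
    have hj' (j : Fin m) : (2 * j.val + 1) % 2 = 1 := by omega
    ext j <;> simp [evIdx, odIdx, hj, hj', add_assoc, CharTwo.add_self_eq_zero]

lemma vecMul_interKron_even {m : ℕ} (A : Matrix (Fin m) (Fin m) (ZMod 2))
    (w : Fin (2 * m) → ZMod 2) (l : Fin m) :
    Matrix.vecMul w (interKron A) (evIdx l) = Matrix.vecMul (splitEquiv m w).1 A l := by
  have hj (j : Fin m) : (2 * j.val + 1) / 2 = j.val := by omega
  have hj' (j : Fin m) : (2 * j.val + 1) % 2 = 1 := by omega
  simp only [Matrix.vecMul, dotProduct]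
  rw [sum_pairs]
  refine Finset.sum_congr rfl fun j _ => ?_
  simp [interKron, splitEquiv, evIdx, odIdx, hj, hj', G2, add_mul]

lemma vecMul_interKron_odd {m : ℕ} (A : Matrix (Fin m) (Fin m) (ZMod 2))
    (w : Fin (2 * m) → ZMod 2) (l : Fin m) :
    Matrix.vecMul w (interKron A) (odIdx l) = Matrix.vecMul (splitEquiv m w).2 A l := by
  have hj (j : Fin m) : (2 * j.val + 1) / 2 = j.val := by omega
  have hj' (j : Fin m) : (2 * j.val + 1) % 2 = 1 := by omega
  simp only [Matrix.vecMul, dotProduct]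
  rw [sum_pairs]
  refine Finset.sum_congr rfl fun j _ => ?_
  simp [interKron, splitEquiv, evIdx, odIdx, hj, hj', G2]

/-! ### Adjacent-bits-channels as prefix sums -/

/-- The unnormalised likelihood of `y` given that the first `k` message bits agree with `v`:
the sum of `∏ W(y_j | (wM)_j)` over all messages `w` with that prefix. -/
noncomputable def prefixSum {𝒴 : Type*} {m : ℕ} (W : ZMod 2 → 𝒴 → ℝ)
    (M : Matrix (Fin m) (Fin m) (ZMod 2)) (k : ℕ) (y : Fin m → 𝒴) (v : ℕ → ZMod 2) : ℝ :=
  ∑ w : Fin m → ZMod 2,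
    if ∀ j : Fin m, j.val < k → w j = v j.val then ∏ j, W (Matrix.vecMul w M j) (y j) else 0

/-- Two adjacent message bits are jointly uniform. -/
lemma prob_two_bits {𝒴 : Type*} [Fintype 𝒴] {m : ℕ} (W : ZMod 2 → 𝒴 → ℝ)
    (hW1 : ∀ x, ∑ y, W x y = 1) (M : Matrix (Fin m) (Fin m) (ZMod 2))
    (i : ℕ) (hi : i + 1 < m) (a b : ZMod 2) :
    prob (polarPMF W M)
      (fun p => ∀ j : Fin m, (j.val = i → p.1 j = a) ∧ (j.val = i + 1 → p.1 j = b)) = 1 / 4 := by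
  have hy (w : Fin m → ZMod 2) :
      ∑ y : Fin m → 𝒴, ∏ j, W (Matrix.vecMul w M j) (y j) = 1 := by
    rw [← Fintype.prod_sum (fun j y => W (Matrix.vecMul w M j) y)]
    simp [hW1]
  have h1 : prob (polarPMF W M)
      (fun p => ∀ j : Fin m, (j.val = i → p.1 j = a) ∧ (j.val = i + 1 → p.1 j = b)) =
      ∑ w : Fin m → ZMod 2, ∏ j : Fin m,
        if (j.val = i → w j = a) ∧ (j.val = i + 1 → w j = b) then (1 / 2 : ℝ) else 0 := by
    unfold prob polarPMF
    rw [Fintype.sum_prod_type]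
    refine Finset.sum_congr rfl fun w _ => ?_
    rw [Finset.prod_ite_zero]
    simp only [Finset.mem_univ, true_imp_iff]
    split_ifs with h
    · rw [← Finset.mul_sum, hy]
      simp
    · simp
  rw [h1, ← Fintype.prod_sum (fun (j : Fin m) (x : ZMod 2) =>
    if (j.val = i → x = a) ∧ (j.val = i + 1 → x = b) then (1 / 2 : ℝ) else 0)]
  -- A free bit contributes `1/2 + 1/2 = 1`, a prescribed one contributes `1/2`.
  have h2 (j : Fin m) : (∑ x : ZMod 2,
      if (j.val = i → x = a) ∧ (j.val = i + 1 → x = b) then (1 / 2 : ℝ) else 0) =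
      (if j = (⟨i, by omega⟩ : Fin m) then 1 / 2 else 1) *
        (if j = (⟨i + 1, hi⟩ : Fin m) then 1 / 2 else 1) := by
    simp only [Fin.ext_iff]
    by_cases h : j.val = i
    · simp [h]
    · by_cases h' : j.val = i + 1
      · simp [h']
      · simp [h, h']
  simp only [h2]
  rw [Finset.prod_mul_distrib]
  simp
  norm_num

lemma adjChannel_eq {𝒴 : Type*} [Fintype 𝒴] {m : ℕ} (W : ZMod 2 → 𝒴 → ℝ)
    (hW1 : ∀ x, ∑ y, W x y = 1) (M : Matrix (Fin m) (Fin m) (ZMod 2))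
    (i : ℕ) (hi : i + 1 < m) (y : Fin m → 𝒴) (v : ℕ → ZMod 2) (a b : ZMod 2) :
    adjChannel W M i y v a b = 4 * (1 / 2 : ℝ) ^ m * ∑ w : Fin m → ZMod 2,
      if ∀ j : Fin m, (j.val < i → w j = v j.val) ∧ (j.val = i → w j = a) ∧
          (j.val = i + 1 → w j = b)
        then ∏ j, W (Matrix.vecMul w M j) (y j) else 0 := by
  unfold adjChannel
  rw [prob_two_bits W hW1 M i hi]
  have : prob (polarPMF W M)
      (fun p => p.2 = y ∧ ∀ j : Fin m,
        (j.val < i → p.1 j = v j.val) ∧ (j.val = i → p.1 j = a) ∧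
          (j.val = i + 1 → p.1 j = b)) = (1 / 2 : ℝ) ^ m * ∑ w : Fin m → ZMod 2,
      if ∀ j : Fin m, (j.val < i → w j = v j.val) ∧ (j.val = i → w j = a) ∧
          (j.val = i + 1 → w j = b)
        then ∏ j, W (Matrix.vecMul w M j) (y j) else 0 := by
    unfold prob polarPMF
    rw [Fintype.sum_prod_type, Finset.mul_sum]
    refine Finset.sum_congr rfl fun w _ => ?_
    rw [Finset.sum_eq_single y]
    · simp only [true_and, mul_ite, mul_zero]
    · intro z _ hz
      simp [hz]
    · simp
  rw [this]
  ring

/-- An adjacent-bits-channel whose conditioning bits continue the prefix `v` is a prefix sum. -/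
lemma adjChannel_eq_prefixSum {𝒴 : Type*} [Fintype 𝒴] {m : ℕ} (W : ZMod 2 → 𝒴 → ℝ)
    (hW1 : ∀ x, ∑ y, W x y = 1) (M : Matrix (Fin m) (Fin m) (ZMod 2))
    (i : ℕ) (hi : i + 1 < m) (y : Fin m → 𝒴) (v : ℕ → ZMod 2) :
    adjChannel W M i y v (v i) (v (i + 1)) =
      4 * (1 / 2 : ℝ) ^ m * prefixSum W M (i + 2) y v := by
  rw [adjChannel_eq W hW1 M i hi, prefixSum]
  congr 1
  refine Finset.sum_congr rfl fun w _ => ?_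
  refine if_congr (forall_congr' fun j => ?_) rfl rfl
  constructor
  · rintro ⟨h1, h2, h3⟩ h
    rcases lt_trichotomy j.val i with h' | h' | h'
    · exact h1 h'
    · rw [h2 h', h']
    · have h'' : j.val = i + 1 := by omega
      rw [h3 h'', h'']
  · intro h
    refine ⟨fun h' => h (by omega), fun h' => ?_, fun h' => ?_⟩
    · rw [h (by omega), h']
    · rw [h (by omega), h']

/-- Summing over the second conditioning bit leaves that bit free. -/
lemma sum_adjChannel {𝒴 : Type*} [Fintype 𝒴] {m : ℕ} (W : ZMod 2 → 𝒴 → ℝ)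
    (hW1 : ∀ x, ∑ y, W x y = 1) (M : Matrix (Fin m) (Fin m) (ZMod 2))
    (i : ℕ) (hi : i + 1 < m) (y : Fin m → 𝒴) (v : ℕ → ZMod 2) :
    ∑ b : ZMod 2, adjChannel W M i y v (v i) b =
      4 * (1 / 2 : ℝ) ^ m * prefixSum W M (i + 1) y v := by
  simp only [adjChannel_eq W hW1 M i hi]
  rw [← Finset.mul_sum, Finset.sum_comm, prefixSum]
  congr 1
  refine Finset.sum_congr rfl fun w _ => ?_
  rw [Finset.sum_eq_single (w ⟨i + 1, hi⟩)]
  · refine if_congr (forall_congr' fun j => ?_) rfl rfl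
    constructor
    · rintro ⟨h1, h2, h3⟩ h
      rcases lt_or_eq_of_le (Nat.lt_succ_iff.mp h) with h' | h'
      · exact h1 h'
      · rw [h2 h', h']
    · intro h
      refine ⟨fun h' => h (by omega), fun h' => ?_, fun h' => ?_⟩
      · rw [h (by omega), h']
      · congr 1
        exact Fin.ext h'
  · intro b _ hb
    rw [if_neg]
    intro h
    exact hb ((h ⟨i + 1, hi⟩).2.2 rfl).symm
  · simp

/-- The likelihood for `A ⊗ G₂` factors once an even number of leading bits is prescribed. -/
lemma prefixSum_kron {𝒴 : Type*} {m : ℕ} (W : ZMod 2 → 𝒴 → ℝ)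
    (A : Matrix (Fin m) (Fin m) (ZMod 2)) (i : ℕ) (y : Fin (2 * m) → 𝒴) (v : ℕ → ZMod 2) :
    prefixSum W (interKron A) (2 * i) y v =
      prefixSum W A i (fun j => y (evIdx j)) (fun t => v (2 * t) + v (2 * t + 1)) *
        prefixSum W A i (fun j => y (odIdx j)) (fun t => v (2 * t + 1)) := by
  unfold prefixSum
  rw [Fintype.sum_mul_sum, ← Fintype.sum_prod_type']
  refine Fintype.sum_equiv (splitEquiv m) _ _ fun w => ?_
  rw [prod_pairs]
  simp only [vecMul_interKron_even, vecMul_interKron_odd, ite_zero_mul_ite_zero]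
  refine if_congr ?_ rfl rfl
  rw [forall_pairs, ← forall_and]
  refine forall_congr' fun j => ?_
  simp only [evIdx, odIdx, splitEquiv, Equiv.coe_fn_mk]
  constructor
  · rintro ⟨h0, h1⟩
    exact ⟨fun h => by rw [h0 (by omega), h1 (by omega)], fun h => h1 (by omega)⟩
  · rintro ⟨h0, h1⟩
    refine ⟨fun h => ?_, fun h => h1 (by omega)⟩
    have h0' := h0 (by omega)
    rw [h1 (by omega)] at h0'
    exact add_right_cancel h0'

/-! ### The permutation `P_𝓘` -/

lemma swapPerm_swapPerm (I : Finset ℕ) (hI0 : ∀ x ∈ I, 1 ≤ x) (hIeven : ∀ x ∈ I, 2 ∣ x) (j : ℕ) :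
    swapPerm I (swapPerm I j) = j := by
  have key (x : ℕ) (h : x ∈ I) (h' : x + 1 ∈ I) : False := by
    have := hIeven _ h
    have := hIeven _ h'
    omega
  unfold swapPerm
  by_cases h1 : j + 1 ∈ I
  · have : j + 1 + 1 ∉ I := fun h => key _ h1 h
    simp [h1, this]
  · by_cases h2 : j ∈ I
    · have := hI0 j h2
      have h3 : j - 1 + 1 = j := by omega
      simp [h1, h2, h3]
    · simp [h1, h2]

/-- The swaps preserve every initial segment `{0, …, k-1}` whose end `k` is not swapped
across. -/
lemma swapPerm_lt (I : Finset ℕ) (k : ℕ) (hk : k ∉ I) {j : ℕ} (hj : j < k) :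
    swapPerm I j < k := by
  unfold swapPerm
  split_ifs with h1 h2
  · have : j + 1 ≠ k := fun h => hk (h ▸ h1)
    omega
  · omega
  · exact hj

/-- Multiplying by `P_𝓘` amounts to permuting the prescribed prefix, provided no swap crosses
its end. -/
lemma prefixSum_perm {𝒴 : Type*} {n : ℕ} (W : ZMod 2 → 𝒴 → ℝ)
    (B : Matrix (Fin n) (Fin n) (ZMod 2)) (I : Finset ℕ) (hI0 : ∀ x ∈ I, 1 ≤ x)
    (hIeven : ∀ x ∈ I, 2 ∣ x) (hn : n ∉ I) (k : ℕ) (hk : k ∉ I)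
    (y : Fin n → 𝒴) (v : ℕ → ZMod 2) :
    prefixSum W (permMatrix I n * B) k y v = prefixSum W B k y (fun t => v (swapPerm I t)) := by
  have hinv := swapPerm_swapPerm I hI0 hIeven
  let s : Equiv.Perm (Fin n) :=
    { toFun := fun j => ⟨swapPerm I j.val, swapPerm_lt I n hn j.isLt⟩
      invFun := fun j => ⟨swapPerm I j.val, swapPerm_lt I n hn j.isLt⟩
      left_inv := fun j => Fin.ext (hinv _)
      right_inv := fun j => Fin.ext (hinv _) }
  have hP (w : Fin n → ZMod 2) : Matrix.vecMul w (permMatrix I n) = fun j => w (s j) := by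
    funext c
    simp only [Matrix.vecMul, dotProduct, permMatrix]
    rw [Finset.sum_eq_single (s c)]
    · simp [s, hinv]
    · intro r _ hr
      rw [if_neg, mul_zero]
      intro h
      refine hr (Fin.ext ?_)
      simp only [s, Equiv.coe_fn_mk]
      rw [← h, hinv]
    · simp
  unfold prefixSum
  refine Fintype.sum_equiv (s.arrowCongr (Equiv.refl _)) _ _ fun w => ?_
  have hw : s.arrowCongr (Equiv.refl (ZMod 2)) w = fun j => w (s j) := rfl
  rw [hw, ← Matrix.vecMul_vecMul, hP]
  refine if_congr ?_ rfl rfl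
  constructor
  · intro h j hj
    exact h (s j) (swapPerm_lt I k hk hj)
  · intro h j hj
    have this : w (s (s j)) = v (swapPerm I (s j).val) := h (s j) (swapPerm_lt I k hk hj)
    have hs : s (s j) = j := Fin.ext (hinv _)
    have hs' : swapPerm I (s j).val = j.val := hinv _
    rwa [hs, hs'] at this

/-! ### The `▽` identity -/

/-- Lemma 2, '▽' identity (`2i ∉ 𝓘` and `2(i−1) ∉ 𝓘`): `V_{2i−1}^{Gₙ} = (V_i^A)^▽`,
covering Cases iv) and v) (paper's 1-based index `i`, `n = 2m ≥ 4`; the channels below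
use 0-based indices and `û = u ∘ swapPerm 𝓘`). -/
theorem abs_adjChannel_nabla {𝒴 : Type*} [Fintype 𝒴]
    (W : ZMod 2 → 𝒴 → ℝ) (hW0 : ∀ x y, 0 ≤ W x y) (hW1 : ∀ x, ∑ y, W x y = 1)
    (m : ℕ) (hm : 2 ≤ m) (A : Matrix (Fin m) (Fin m) (ZMod 2))
    (I : Finset ℕ)
    (hIrange : ∀ x ∈ I, 1 ≤ x ∧ x ≤ 2 * m - 1)
    (hIeven : ∀ x ∈ I, 2 ∣ x)
    (hIsep : ∀ x ∈ I, ∀ z ∈ I, x ≠ z → x + 4 ≤ z ∨ z + 4 ≤ x)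
    (i : ℕ) (hi1 : 1 ≤ i) (hi2 : i ≤ m - 1)
    (hmem : 2 * i ∉ I) (hmem' : 2 * (i - 1) ∉ I)
    (y : Fin (2 * m) → 𝒴) (u : ℕ → ZMod 2) :
    adjChannel W (permMatrix I (2 * m) * interKron A) (2 * i - 2) y u
        (u (2 * i - 2)) (u (2 * i - 1)) =
      (1 / 4 : ℝ) * ∑ c : ZMod 2, ∑ d : ZMod 2,
        adjChannel W A (i - 1) (fun j => y ⟨2 * j.val, by have := j.isLt; omega⟩)
            (fun t => u (swapPerm I (2 * t)) + u (swapPerm I (2 * t + 1)))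
            (u (2 * i - 2) + u (2 * i - 1)) (c + d) *
          adjChannel W A (i - 1) (fun j => y ⟨2 * j.val + 1, by have := j.isLt; omega⟩)
            (fun t => u (swapPerm I (2 * t + 1))) (u (2 * i - 1)) d := by
  have hI0 : ∀ x ∈ I, 1 ≤ x := fun x hx => (hIrange x hx).1
  have hn : 2 * m ∉ I := fun h => by
    have := (hIrange _ h).2
    omega
  obtain ⟨k, rfl⟩ : ∃ k, i = k + 1 := ⟨i - 1, by omega⟩
  have e1 : 2 * (k + 1) - 2 = 2 * k := by omega
  have e2 : 2 * (k + 1) - 1 = 2 * k + 1 := by omega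
  have e3 : k + 1 - 1 = k := by omega
  rw [e3] at hmem'
  simp only [e1, e2, e3]
  -- The two conditioning positions are fixed by the permutation.
  have hodd : 2 * k + 1 ∉ I := fun h => by
    have := hIeven _ h
    omega
  have f1 : swapPerm I (2 * k) = 2 * k := by simp [swapPerm, hodd, hmem']
  have f2 : swapPerm I (2 * k + 1) = 2 * k + 1 := by
    have : 2 * k + 1 + 1 ∉ I := hmem
    simp [swapPerm, hodd, this]
  rw [adjChannel_eq_prefixSum W hW1 _ (2 * k) (by omega),
    prefixSum_perm W _ I hI0 hIeven hn (2 * k + 2) hmem,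
    show 2 * k + 2 = 2 * (k + 1) by ring, prefixSum_kron]
  have g1 := sum_adjChannel W hW1 A k (by omega) (fun j => y (evIdx j))
    (fun t => u (swapPerm I (2 * t)) + u (swapPerm I (2 * t + 1)))
  have g2 := sum_adjChannel W hW1 A k (by omega) (fun j => y (odIdx j))
    (fun t => u (swapPerm I (2 * t + 1)))
  simp only [f1, f2] at g1 g2
  rw [Finset.sum_comm]
  -- For fixed `d`, the shift `c ↦ c + d` is a bijection of `𝔽₂`.
  have hshift (d : ZMod 2) (f : ZMod 2 → ℝ) : ∑ c, f (c + d) = ∑ c, f c :=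
    Equiv.sum_comp (Equiv.addRight d) f
  simp only [← Finset.sum_mul]
  simp only [hshift _ (fun c => adjChannel W A k
    (fun j => y ⟨2 * j.val, by have := j.isLt; omega⟩)
    (fun t => u (swapPerm I (2 * t)) + u (swapPerm I (2 * t + 1)))
    (u (2 * k) + u (2 * k + 1)) c)]
  rw [← Finset.mul_sum]
  simp only [evIdx, odIdx] at g1 g2 ⊢
  rw [g1, g2, pow_mul', sq]
  ring
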